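/- arXiv:1703.01278 — 3 statements merged into one kernel-verified Lean document; each statement's English description precedes it below -/
import Mathlib

section
/- Let n ≥ 1, Λ > 0, Λ₀ ≥ 0, p > 2, m > 1 + n/p (so that p(m−1) > n), let Ω ⊆ ℝⁿ be open and T₀ < 0, and suppose u satisfies both D(Λ,A,f) and V(Λ,Λ₀,0) on (T₀,0)×Ω. Let α, β > 0 satisfy β ≤ α⁻¹, β ≤ α^{−(p−1)/(p−2)}, and β ≤ α^{−(p(m−1)+1)/(p(m−1)−n)}. Define v(t,x) := α·u(α^{p−1}β^p t, β x), A′(t,x) := α^{p−1}β^{p−2}·A(α^{p−1}β^p t, β x), f′(t,x) := α^p β^p·f(α^{p−1}β^p t, β x), and Λ₀′ := α^{p−1}β^{p−2}·Λ₀. Then v satisfies D(Λ,A′,f′) and V(Λ,Λ₀′,0) on (T₀/(α^{p−1}β^p), 0) × (1/β)Ω, and moreover Λ₀′ ≤ Λ₀, ‖A′‖_∞ ≤ ‖A‖_∞, and ‖f′‖ₘ ≤ ‖f‖ₘ. -/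
open MeasureTheory Filter Set
open scoped ENNReal NNReal Topology RealInnerProductSpace

noncomputable section

/-- The spatial domain `ℝⁿ`. -/
abbrev Spc (n : ℕ) := EuclideanSpace ℝ (Fin n)

/-- Space-time `ℝ × ℝⁿ`. -/
abbrev Spt (n : ℕ) := ℝ × Spc n

/-- Spatial gradient of a function on space-time. -/
def spaceGrad {n : ℕ} (φ : Spt n → ℝ) (z : Spt n) : Spc n :=
  WithLp.toLp 2 (fun i => fderiv ℝ φ z ((0 : ℝ), EuclideanSpace.single i (1 : ℝ)))

/-- Time derivative of a function on space-time. -/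
def timeDeriv {n : ℕ} (φ : Spt n → ℝ) (z : Spt n) : ℝ :=
  fderiv ℝ φ z ((1 : ℝ), 0)

/-- A smooth test function compactly supported inside `S`. -/
def IsTestOn {n : ℕ} (S : Set (Spt n)) (φ : Spt n → ℝ) : Prop :=
  ContDiff ℝ (⊤ : ℕ∞) φ ∧ HasCompactSupport φ ∧ tsupport φ ⊆ S

/-- `u` satisfies `∂ₜ u + Λ⁻¹ |∇u|^p − div(A ∇u) ≤ f` in the sense of distributions on
`(a,b) × Ω`, with essential boundedness, and with spatial weak gradient `G ∈ Lᵖ`. -/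
def SatD (n : ℕ) (p Λ : ℝ) (A : Spt n → Spc n →L[ℝ] Spc n) (f u : Spt n → ℝ)
    (G : Spt n → Spc n) (a b : ℝ) (Ω : Set (Spc n)) : Prop :=
  MemLp u ⊤ (volume.restrict (Ioo a b ×ˢ Ω)) ∧
  MemLp G (ENNReal.ofReal p) (volume.restrict (Ioo a b ×ˢ Ω)) ∧
  (∀ φ : Spt n → ℝ, IsTestOn (Ioo a b ×ˢ Ω) φ → ∀ i : Fin n,
    ∫ z in Ioo a b ×ˢ Ω, u z * fderiv ℝ φ z ((0 : ℝ), EuclideanSpace.single i (1 : ℝ))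
      = - ∫ z in Ioo a b ×ˢ Ω, G z i * φ z) ∧
  (∀ φ : Spt n → ℝ, IsTestOn (Ioo a b ×ˢ Ω) φ → (∀ z, 0 ≤ φ z) →
    ∫ z in Ioo a b ×ˢ Ω,
      (-(u z) * timeDeriv φ z + Λ⁻¹ * ‖G z‖ ^ p * φ z
        + ⟪A z (G z), spaceGrad φ z⟫ - f z * φ z) ≤ 0)

/-- Lower semicontinuous envelope. -/
def lscEnv {n : ℕ} (u : Spt n → ℝ) (z : Spt n) : ℝ := liminf u (𝓝 z)

/-- Second directional derivative of `g` at `x` in direction `v`. -/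
def secondDerivAlong {n : ℕ} (g : Spc n → ℝ) (x v : Spc n) : ℝ :=
  fderiv ℝ (fun y => fderiv ℝ g y v) x v

/-- `m⁻` of the spatial Hessian of `g` at `x`: the minimum of `0` and the least
eigenvalue (computed as the least Rayleigh quotient over unit directions). -/
def mMinusOf {n : ℕ} (g : Spc n → ℝ) (x : Spc n) : ℝ :=
  min 0 (sInf {r : ℝ | ∃ v : Spc n, ‖v‖ = 1 ∧ r = secondDerivAlong g x v})

/-- `u` satisfies `∂ₜ u + Λ |∇u|^p − Λ₀ m⁻(D²u) ≥ g` in the viscosity sense on the open set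
`U`, via its lower semicontinuous envelope. -/
def SatV (n : ℕ) (p Λ Λ₀ g : ℝ) (u : Spt n → ℝ) (U : Set (Spt n)) : Prop :=
  ∀ ψ : Spt n → ℝ, ∀ z₀ ∈ U,
    (∃ V ∈ 𝓝 z₀, ContDiffOn ℝ 2 ψ V) →
    IsLocalMin (fun z => lscEnv u z - ψ z) z₀ →
    g ≤ timeDeriv ψ z₀ + Λ * ‖spaceGrad ψ z₀‖ ^ p
        - Λ₀ * mMinusOf (fun x => ψ (z₀.1, x)) z₀.2

/-! Let `D (t, x) = (c t, b x)` with `c = α ^ (p - 1) * β ^ p` and `b = β`. Every test function on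
the dilated cylinder is `φ ∘ D` for a test function `φ` on the original one, so that testing the
inequality for `v = α • (u ∘ D)` against `φ ∘ D` reduces to testing the one for `u` against `φ`.
Time derivatives gain a factor `c` and spatial ones a factor `b`; since `α c = (α β) ^ p`, the terms
`∂ₜ u` and `|∇u| ^ p` are both multiplied by `α c`, and the other terms follow once `A` and `Λ₀` are
multiplied by `c / b ^ 2` and `f` by `α c`. The viscosity inequality scales in the same way.

The factor `α ^ (p - 1) * β ^ (p - 2)` of `A` and `Λ₀` is at most `1` by the second condition on
`β`. The `Lᵐ` norm of `f` is multiplied by `α c (c b ^ n) ^ (-1 / m)`, whose `m`-th power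
`α ^ (p (m - 1) + 1) * β ^ (p (m - 1) - n)` is at most `1` by the third. -/

section LinearChangeOfVariables

variable {E : Type*} [NormedAddCommGroup E] [NormedSpace ℝ E] [FiniteDimensional ℝ E]
  [MeasurableSpace E] [BorelSpace E] (μ : Measure E) [μ.IsAddHaarMeasure] (L : E ≃L[ℝ] E)
  (S : Set E)

lemma map_continuousLinearEquiv_restrict_preimage :
    (μ.restrict (L ⁻¹' S)).map L
      = ENNReal.ofReal |(LinearMap.det (L : E →ₗ[ℝ] E))⁻¹| • μ.restrict S := by
  have hmap : μ.map L = ENNReal.ofReal |(LinearMap.det (L : E →ₗ[ℝ] E))⁻¹| • μ :=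
    Measure.map_linearMap_addHaar_eq_smul_addHaar μ L.toLinearEquiv.isUnit_det'.ne_zero
  rw [← Measure.restrict_smul, ← hmap]
  exact (L.toHomeomorph.measurableEmbedding.restrict_map μ S).symm

lemma setIntegral_preimage_comp_continuousLinearEquiv {F : Type*} [NormedAddCommGroup F]
    [NormedSpace ℝ F] (g : E → F) :
    ∫ x in L ⁻¹' S, g (L x) ∂μ
      = |(LinearMap.det (L : E →ₗ[ℝ] E))⁻¹| • ∫ x in S, g x ∂μ := by
  rw [← ENNReal.toReal_ofReal (abs_nonneg _), ← integral_smul_measure,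
    ← map_continuousLinearEquiv_restrict_preimage]
  exact (L.toHomeomorph.measurableEmbedding.integral_map g).symm

lemma eLpNorm_comp_continuousLinearEquiv {F : Type*} [NormedAddCommGroup F] (g : E → F)
    (q : ℝ≥0∞) :
    eLpNorm (g ∘ L) q (μ.restrict (L ⁻¹' S))
      = ENNReal.ofReal |(LinearMap.det (L : E →ₗ[ℝ] E))⁻¹| ^ (1 / q).toReal
        * eLpNorm g q (μ.restrict S) := by
  have hdet : LinearMap.det (L : E →ₗ[ℝ] E) ≠ 0 := L.toLinearEquiv.isUnit_det'.ne_zero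
  rw [← smul_eq_mul, ← eLpNorm_smul_measure_of_ne_zero (by simpa using hdet),
    ← map_continuousLinearEquiv_restrict_preimage]
  exact L.toHomeomorph.measurableEmbedding.eLpNorm_map_measure.symm

lemma eLpNorm_const_smul_comp_continuousLinearEquiv_le {F : Type*} [NormedAddCommGroup F]
    [NormedSpace ℝ F] (g : E → F) {q : ℝ≥0∞} {k : ℝ}
    (hk : |k| * |(LinearMap.det (L : E →ₗ[ℝ] E))⁻¹| ^ (1 / q).toReal ≤ 1) :
    eLpNorm (k • (g ∘ L)) q (μ.restrict (L ⁻¹' S)) ≤ eLpNorm g q (μ.restrict S) := by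
  rw [eLpNorm_const_smul, eLpNorm_comp_continuousLinearEquiv, ← mul_assoc,
    Real.enorm_eq_ofReal_abs, ENNReal.ofReal_rpow_of_nonneg (abs_nonneg _) ENNReal.toReal_nonneg,
    ← ENNReal.ofReal_mul (abs_nonneg k)]
  exact mul_le_of_le_one_left zero_le (ENNReal.ofReal_le_one.2 hk)

variable {μ S} in
lemma memLp_comp_continuousLinearEquiv {F : Type*} [NormedAddCommGroup F] {g : E → F}
    {q : ℝ≥0∞} (hg : MemLp g q (μ.restrict S)) :
    MemLp (g ∘ L) q (μ.restrict (L ⁻¹' S)) := by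
  refine L.toHomeomorph.measurableEmbedding.memLp_map_measure_iff.1 ?_
  rw [ContinuousLinearEquiv.coe_toHomeomorph, map_continuousLinearEquiv_restrict_preimage]
  exact hg.smul_measure ENNReal.ofReal_ne_top

end LinearChangeOfVariables

lemma liminf_const_mul_of_pos {ι : Type*} {F : Filter ι} {a : ℝ} (ha : 0 < a) (u : ι → ℝ) :
    liminf (a • u) F = a * liminf u F := by
  rw [liminf_eq, liminf_eq, ← smul_eq_mul, ← Real.sSup_smul_of_nonneg ha.le]
  congr 1
  ext r
  simp only [Set.mem_smul_set_iff_inv_smul_mem₀ ha.ne', mem_ofPred_eq, Pi.smul_apply,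
    smul_eq_mul, inv_mul_le_iff₀ ha]

lemma isLocalMin_comp_homeomorph_iff {X Y β : Type*} [TopologicalSpace X] [TopologicalSpace Y]
    [Preorder β] (e : X ≃ₜ Y) {f : Y → β} {x : X} :
    IsLocalMin (f ∘ e) x ↔ IsLocalMin f (e x) := by
  simp only [IsLocalMin, IsMinFilter, ← e.map_nhds_eq x, eventually_map, Function.comp_apply]

lemma isLocalMin_const_smul_iff {X : Type*} [TopologicalSpace X] {a : ℝ} (ha : 0 < a)
    {f : X → ℝ} {x : X} : IsLocalMin (a • f) x ↔ IsLocalMin f x := by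
  simp only [IsLocalMin, IsMinFilter, Pi.smul_apply, smul_eq_mul, mul_le_mul_iff_right₀ ha]

lemma norm_smul_rpow {E : Type*} [SeminormedAddCommGroup E] [NormedSpace ℝ E] {k : ℝ}
    (hk : 0 ≤ k) (x : E) (p : ℝ) : ‖k • x‖ ^ p = k ^ p * ‖x‖ ^ p := by
  rw [norm_smul, Real.norm_of_nonneg hk, Real.mul_rpow hk (norm_nonneg x)]

lemma exists_mem_nhds_contDiffOn_of_const_smul_comp {E E' F : Type*} [NormedAddCommGroup E]
    [NormedSpace ℝ E] [NormedAddCommGroup E'] [NormedSpace ℝ E'] [NormedAddCommGroup F]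
    [NormedSpace ℝ F] {a : ℝ} (ha : a ≠ 0) (L : E ≃L[ℝ] E') {k : WithTop ℕ∞} {ψ : E' → F} {x : E}
    (h : ∃ V ∈ 𝓝 x, ContDiffOn ℝ k (a • (ψ ∘ L)) V) :
    ∃ V ∈ 𝓝 (L x), ContDiffOn ℝ k ψ V := by
  obtain ⟨V, hV, hψ⟩ := h
  have hψL : ContDiffOn ℝ k (ψ ∘ L) V := by
    simpa [ha, Function.comp_def] using hψ.const_smul a⁻¹
  refine ⟨L '' V, L.toHomeomorph.isOpenMap.image_mem_nhds hV, ?_⟩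
  rwa [← L.contDiffOn_comp_iff, preimage_image_eq V L.injective]

section SpaceTime

variable {n : ℕ}

lemma lscEnv_const_smul_comp_homeomorph {a : ℝ} (ha : 0 < a) (e : Spt n ≃ₜ Spt n)
    (u : Spt n → ℝ) : lscEnv (a • (u ∘ e)) = a • (lscEnv u ∘ e) := by
  ext z
  rw [lscEnv, liminf_const_mul_of_pos ha, liminf_comp, e.map_nhds_eq]
  rfl

lemma isTestOn_comp_continuousLinearEquiv_iff (L : Spt n ≃L[ℝ] Spt n) {S : Set (Spt n)}
    {φ : Spt n → ℝ} : IsTestOn (L ⁻¹' S) (φ ∘ L) ↔ IsTestOn S φ := by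
  have htsupport : tsupport (φ ∘ L) = L ⁻¹' tsupport φ :=
    tsupport_comp_eq_preimage φ L.toHomeomorph
  rw [IsTestOn, IsTestOn, L.contDiff_comp_iff, HasCompactSupport, HasCompactSupport, htsupport,
    L.surjective.preimage_subset_preimage_iff]
  exact and_congr_right fun _ => and_congr_left fun _ => L.toHomeomorph.isCompact_preimage

lemma secondDerivAlong_const_mul_comp_smul (a d : ℝ) (g : Spc n → ℝ) (x v : Spc n) :
    secondDerivAlong (fun y => a * g (d • y)) x v
      = a * d ^ 2 * secondDerivAlong g (d • x) v := by
  have hfirst : (fun y => fderiv ℝ (fun y => a * g (d • y)) y v)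
      = (a * d) • fun y => fderiv ℝ g (d • y) v := by
    ext y
    change fderiv ℝ (a • fun y => g (d • y)) y v = _
    simp [fderiv_const_smul_field, fderiv_comp_smul, mul_assoc]
  rw [secondDerivAlong, hfirst, fderiv_const_smul_field, Pi.smul_apply,
    fderiv_comp_smul (f := fun w => fderiv ℝ g w v), secondDerivAlong]
  simp only [_root_.smul_apply, smul_eq_mul]
  ring

open scoped Pointwise in
lemma mMinusOf_const_mul_comp_smul {a : ℝ} (ha : 0 ≤ a) (d : ℝ) (g : Spc n → ℝ) (x : Spc n) :
    mMinusOf (fun y => a * g (d • y)) x = a * d ^ 2 * mMinusOf g (d • x) := by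
  have hk : 0 ≤ a * d ^ 2 := by positivity
  have hset : {r : ℝ | ∃ v : Spc n, ‖v‖ = 1 ∧
        r = secondDerivAlong (fun y => a * g (d • y)) x v}
      = (a * d ^ 2) • {r : ℝ | ∃ v : Spc n, ‖v‖ = 1 ∧ r = secondDerivAlong g (d • x) v} := by
    ext r
    simp only [secondDerivAlong_const_mul_comp_smul, Set.mem_smul_set, mem_ofPred_eq, smul_eq_mul]
    constructor
    · rintro ⟨v, hv, rfl⟩
      exact ⟨_, ⟨v, hv, rfl⟩, rfl⟩
    · rintro ⟨_, ⟨v, hv, rfl⟩, rfl⟩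
      exact ⟨v, hv, rfl⟩
  rw [mMinusOf, hset, Real.sInf_smul_of_nonneg hk, smul_eq_mul, mMinusOf,
    mul_min_of_nonneg _ _ hk, mul_zero]

lemma timeDeriv_const_smul (a : ℝ) (φ : Spt n → ℝ) (z : Spt n) :
    timeDeriv (a • φ) z = a * timeDeriv φ z := by
  rw [timeDeriv, fderiv_const_smul_field]
  rfl

lemma spaceGrad_const_smul (a : ℝ) (φ : Spt n → ℝ) (z : Spt n) :
    spaceGrad (a • φ) z = a • spaceGrad φ z := by
  rw [spaceGrad, fderiv_const_smul_field]
  rfl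

/-- The anisotropic dilation `(t, x) ↦ (c t, b x)` of space-time. The factors are units of `ℝ`, so
that every dilation is invertible. -/
def dilation (c b : ℝˣ) : Spt n ≃L[ℝ] Spt n :=
  (ContinuousLinearEquiv.smulLeft c).prodCongr (ContinuousLinearEquiv.smulLeft b)

variable (c b : ℝˣ)

lemma dilation_apply (z : Spt n) : dilation c b z = ((c : ℝ) * z.1, (b : ℝ) • z.2) := rfl

lemma det_dilation :
    LinearMap.det ((dilation c b : Spt n ≃L[ℝ] Spt n) : Spt n →ₗ[ℝ] Spt n)
      = (c : ℝ) * (b : ℝ) ^ n := by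
  have hprod : ((dilation c b : Spt n ≃L[ℝ] Spt n) : Spt n →ₗ[ℝ] Spt n) =
      ((c : ℝ) • LinearMap.id).prodMap ((b : ℝ) • LinearMap.id) := rfl
  simp [hprod, LinearMap.det_prodMap]

lemma dilation_preimage_Ioo_prod {c : ℝˣ} (hc : 0 < (c : ℝ)) (s t : ℝ) (Ω : Set (Spc n)) :
    dilation c b ⁻¹' (Ioo s t ×ˢ Ω)
      = Ioo (s / (c : ℝ)) (t / c) ×ˢ ((fun x : Spc n => (b : ℝ) • x) ⁻¹' Ω) :=
  congrArg (· ×ˢ ((fun x : Spc n => (b : ℝ) • x) ⁻¹' Ω)) (preimage_const_mul_Ioo₀ s t hc)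

lemma timeDeriv_comp_dilation (φ : Spt n → ℝ) (z : Spt n) :
    timeDeriv (φ ∘ dilation c b) z = c * timeDeriv φ (dilation c b z) := by
  have htime : dilation c b ((1, 0) : Spt n) = (c : ℝ) • (1, 0) := by simp [dilation_apply]
  rw [timeDeriv, ContinuousLinearEquiv.comp_right_fderiv, ContinuousLinearMap.comp_apply,
    ContinuousLinearEquiv.coe_coe, htime, map_smul, smul_eq_mul, timeDeriv]

lemma spaceGrad_comp_dilation (φ : Spt n → ℝ) (z : Spt n) :
    spaceGrad (φ ∘ dilation c b) z = (b : ℝ) • spaceGrad φ (dilation c b z) := by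
  have hspace (x : Spc n) : dilation c b ((0, x) : Spt n) = (b : ℝ) • (0, x) := by
    simp [dilation_apply]
  ext i
  simp only [spaceGrad, ContinuousLinearEquiv.comp_right_fderiv, ContinuousLinearMap.comp_apply,
    ContinuousLinearEquiv.coe_coe, hspace, map_smul, PiLp.smul_apply]

instance : (volume : Measure (Spt n)).IsAddHaarMeasure :=
  Measure.prod.instIsAddHaarMeasure volume volume

variable {c b}

lemma eLpNorm_const_smul_comp_dilation_le (hc : 0 < (c : ℝ)) (hb : 0 < (b : ℝ)) {F : Type*}
    [NormedAddCommGroup F] [NormedSpace ℝ F] {k : ℝ} (hk : 0 ≤ k) {q : ℝ≥0∞}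
    (h : k * ((c : ℝ) * (b : ℝ) ^ n)⁻¹ ^ (1 / q).toReal ≤ 1) (g : Spt n → F) (S : Set (Spt n)) :
    eLpNorm (k • (g ∘ dilation c b)) q (volume.restrict (dilation c b ⁻¹' S))
      ≤ eLpNorm g q (volume.restrict S) := by
  refine eLpNorm_const_smul_comp_continuousLinearEquiv_le volume _ S g ?_
  rwa [det_dilation, abs_of_nonneg hk, abs_of_pos (by positivity)]

/-- `G` is the weak spatial gradient of `u` on `S`: the third clause of `SatD`. -/
def HasWeakSpaceGradOn (S : Set (Spt n)) (u : Spt n → ℝ) (G : Spt n → Spc n) : Prop :=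
  ∀ φ : Spt n → ℝ, IsTestOn S φ → ∀ i : Fin n,
    ∫ z in S, u z * spaceGrad φ z i = - ∫ z in S, G z i * φ z

/-- The integrand obtained by testing `∂ₜ u + Λ⁻¹ |G|^p − div(A G) − f` against `φ` and moving the
derivatives in `∂ₜ` and `div` onto `φ`. -/
def testDensity (p Λ : ℝ) (A : Spt n → Spc n →L[ℝ] Spc n) (f u : Spt n → ℝ) (G : Spt n → Spc n)
    (φ : Spt n → ℝ) (z : Spt n) : ℝ :=
  -(u z) * timeDeriv φ z + Λ⁻¹ * ‖G z‖ ^ p * φ z + ⟪A z (G z), spaceGrad φ z⟫ - f z * φ z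

/-- `∂ₜ u + Λ⁻¹ |G|^p − div(A G) ≤ f` on `S` in the sense of distributions: the fourth clause of
`SatD`. -/
def IsDistribSubsolutionOn (S : Set (Spt n)) (p Λ : ℝ) (A : Spt n → Spc n →L[ℝ] Spc n)
    (f u : Spt n → ℝ) (G : Spt n → Spc n) : Prop :=
  ∀ φ : Spt n → ℝ, IsTestOn S φ → (∀ z, 0 ≤ φ z) → ∫ z in S, testDensity p Λ A f u G φ z ≤ 0

variable {p Λ a : ℝ} {A : Spt n → Spc n →L[ℝ] Spc n} {f u : Spt n → ℝ} {G : Spt n → Spc n}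
  {S : Set (Spt n)}

lemma HasWeakSpaceGradOn.comp_dilation (a : ℝ) (h : HasWeakSpaceGradOn S u G) :
    HasWeakSpaceGradOn (dilation c b ⁻¹' S) (a • (u ∘ dilation c b))
      ((a * b) • (G ∘ dilation c b)) := by
  intro φ hφ i
  obtain ⟨φ, rfl⟩ : ∃ φ' : Spt n → ℝ, φ' ∘ dilation c b = φ :=
    (dilation c b).injective.surjective_comp_right φ
  rw [isTestOn_comp_continuousLinearEquiv_iff] at hφ
  have hleft (z : Spt n) :
      (a • (u ∘ dilation c b)) z * spaceGrad (φ ∘ dilation c b) z i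
        = a * b * (u (dilation c b z) * spaceGrad φ (dilation c b z) i) := by
    simp only [spaceGrad_comp_dilation, Pi.smul_apply, PiLp.smul_apply, Function.comp_apply,
      smul_eq_mul]
    ring
  have hright (z : Spt n) :
      ((a * b) • (G ∘ dilation c b)) z i * (φ ∘ dilation c b) z
        = a * b * (G (dilation c b z) i * φ (dilation c b z)) := by
    simp only [Pi.smul_apply, PiLp.smul_apply, Function.comp_apply, smul_eq_mul, mul_assoc]
  simp only [hleft, hright, integral_const_mul]
  rw [setIntegral_preimage_comp_continuousLinearEquiv volume (dilation c b) S
      (fun z => u z * spaceGrad φ z i), h φ hφ i, smul_neg, mul_neg,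
    setIntegral_preimage_comp_continuousLinearEquiv volume (dilation c b) S
      (fun z => G z i * φ z)]

lemma testDensity_comp_dilation (ha : 0 < a) (hb : 0 < (b : ℝ)) (hac : a * c = (a * b) ^ p)
    (φ : Spt n → ℝ) (z : Spt n) :
    testDensity p Λ (((c : ℝ) / b ^ 2) • (A ∘ dilation c b)) ((a * c) • (f ∘ dilation c b))
        (a • (u ∘ dilation c b)) ((a * b) • (G ∘ dilation c b)) (φ ∘ dilation c b) z
      = a * c * testDensity p Λ A f u G φ (dilation c b z) := by
  have hflux : ⟪((c : ℝ) / b ^ 2) • A (dilation c b z) ((a * b) • G (dilation c b z)),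
        (b : ℝ) • spaceGrad φ (dilation c b z)⟫
      = a * c * ⟪A (dilation c b z) (G (dilation c b z)), spaceGrad φ (dilation c b z)⟫ := by
    rw [map_smul, real_inner_smul_left, real_inner_smul_left, real_inner_smul_right]
    field_simp
  simp only [testDensity, timeDeriv_comp_dilation, spaceGrad_comp_dilation, Pi.smul_apply,
    Function.comp_apply, _root_.smul_apply, smul_eq_mul, hflux,
    norm_smul_rpow (mul_pos ha hb).le, ← hac]
  ring

lemma IsDistribSubsolutionOn.comp_dilation (ha : 0 < a) (hb : 0 < (b : ℝ)) (hc : 0 < (c : ℝ))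
    (hac : a * c = (a * b) ^ p) (h : IsDistribSubsolutionOn S p Λ A f u G) :
    IsDistribSubsolutionOn (dilation c b ⁻¹' S) p Λ
      (((c : ℝ) / b ^ 2) • (A ∘ dilation c b)) ((a * c) • (f ∘ dilation c b))
      (a • (u ∘ dilation c b)) ((a * b) • (G ∘ dilation c b)) := by
  intro φ hφ hφ0
  obtain ⟨φ, rfl⟩ : ∃ φ' : Spt n → ℝ, φ' ∘ dilation c b = φ :=
    (dilation c b).injective.surjective_comp_right φ
  rw [isTestOn_comp_continuousLinearEquiv_iff] at hφ
  have hφ0' : ∀ z, 0 ≤ φ z := (dilation c b).surjective.forall.2 fun z => hφ0 z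
  simp only [testDensity_comp_dilation ha hb hac, integral_const_mul]
  rw [setIntegral_preimage_comp_continuousLinearEquiv]
  exact mul_nonpos_of_nonneg_of_nonpos (mul_pos ha hc).le
    (smul_nonpos_of_nonneg_of_nonpos (abs_nonneg _) (h φ hφ hφ0'))

theorem SatD.comp_dilation {s t : ℝ} {Ω : Set (Spc n)} (ha : 0 < a) (hb : 0 < (b : ℝ))
    (hc : 0 < (c : ℝ)) (hac : a * c = (a * b) ^ p) (h : SatD n p Λ A f u G s t Ω) :
    SatD n p Λ (((c : ℝ) / b ^ 2) • (A ∘ dilation c b)) ((a * c) • (f ∘ dilation c b))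
      (a • (u ∘ dilation c b)) ((a * b) • (G ∘ dilation c b)) (s / c) (t / c)
      ((fun x : Spc n => (b : ℝ) • x) ⁻¹' Ω) := by
  obtain ⟨hu, hG, hgrad, hsub⟩ := h
  rw [SatD, ← dilation_preimage_Ioo_prod b hc]
  exact ⟨(memLp_comp_continuousLinearEquiv _ hu).const_smul a,
    (memLp_comp_continuousLinearEquiv _ hG).const_smul (a * b),
    HasWeakSpaceGradOn.comp_dilation a hgrad,
    IsDistribSubsolutionOn.comp_dilation ha hb hc hac hsub⟩

theorem SatV.comp_dilation {Λ₀ g : ℝ} (ha : 0 < a) (hb : 0 < (b : ℝ)) (hc : 0 < (c : ℝ))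
    (hac : a * c = (a * b) ^ p) (h : SatV n p Λ Λ₀ g u S) :
    SatV n p Λ ((c : ℝ) / b ^ 2 * Λ₀) (a * c * g) (a • (u ∘ dilation c b))
      (dilation c b ⁻¹' S) := by
  intro ψ z₀ hz₀ hψ hmin
  obtain ⟨ψ, rfl⟩ : ∃ ψ' : Spt n → ℝ, a • (ψ' ∘ dilation c b) = ψ :=
    ⟨a⁻¹ • (ψ ∘ (dilation c b).symm), by ext; simp [ha.ne']⟩
  have hψ' : ∃ V ∈ 𝓝 (dilation c b z₀), ContDiffOn ℝ 2 ψ V :=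
    exists_mem_nhds_contDiffOn_of_const_smul_comp ha.ne' _ hψ
  have hmin' : IsLocalMin (fun z => lscEnv u z - ψ z) (dilation c b z₀) := by
    refine (isLocalMin_comp_homeomorph_iff (dilation c b).toHomeomorph).1 ?_
    rw [← isLocalMin_const_smul_iff ha]
    convert hmin using 1
    ext z
    have henv := lscEnv_const_smul_comp_homeomorph ha (dilation c b).toHomeomorph u
    rw [ContinuousLinearEquiv.coe_toHomeomorph] at henv
    simp [henv, mul_sub]
  have hhess : mMinusOf (fun x => (a • (ψ ∘ dilation c b)) (z₀.1, x)) z₀.2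
      = a * (b : ℝ) ^ 2
        * mMinusOf (fun x => ψ ((dilation c b z₀).1, x)) (dilation c b z₀).2 :=
    mMinusOf_const_mul_comp_smul ha.le b (fun x => ψ (c * z₀.1, x)) z₀.2
  calc a * c * g
    _ ≤ a * c * _ := mul_le_mul_of_nonneg_left (h ψ _ hz₀ hψ' hmin') (mul_pos ha hc).le
    _ = _ := by
      rw [hhess, timeDeriv_const_smul, timeDeriv_comp_dilation, spaceGrad_const_smul,
        spaceGrad_comp_dilation, smul_smul, norm_smul_rpow (mul_pos ha hb).le, ← hac]
      field_simp

end SpaceTime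

lemma rpow_mul_rpow_le_one_of_le_rpow_neg_div {x y r s : ℝ} (hx : 0 < x) (hy : 0 ≤ y)
    (hs : 0 < s) (h : y ≤ x ^ (-r / s)) : x ^ r * y ^ s ≤ 1 := by
  have hys : y ^ s ≤ (x ^ r)⁻¹ := by
    rw [← Real.rpow_neg hx.le, ← div_mul_cancel₀ (-r) hs.ne', Real.rpow_mul hx.le]
    exact Real.rpow_le_rpow hy h hs.le
  calc x ^ r * y ^ s ≤ x ^ r * (x ^ r)⁻¹ := by gcongr
    _ = 1 := mul_inv_cancel₀ (Real.rpow_pos_of_pos hx r).ne'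

lemma rpow_scaling_factor_eq {x y p m : ℝ} (hx : 0 < x) (hy : 0 < y) (hm : m ≠ 0) (n : ℕ) :
    x ^ p * y ^ p * (x ^ (p - 1) * y ^ p * y ^ n)⁻¹ ^ m⁻¹
      = (x ^ (p * (m - 1) + 1) * y ^ (p * (m - 1) - n)) ^ m⁻¹ := by
  have hroot : x ^ p * y ^ p = ((x ^ p * y ^ p) ^ m) ^ m⁻¹ :=
    (Real.rpow_rpow_inv (by positivity) hm).symm
  rw [hroot, ← Real.mul_rpow (by positivity) (by positivity)]
  congr 1
  calc (x ^ p * y ^ p) ^ m * (x ^ (p - 1) * y ^ p * y ^ n)⁻¹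
    _ = (x ^ (p * m) / x ^ (p - 1)) * (y ^ (p * m) / (y ^ p * y ^ (n : ℝ))) := by
      rw [Real.mul_rpow (by positivity) (by positivity), ← Real.rpow_mul hx.le,
        ← Real.rpow_mul hy.le, Real.rpow_natCast]
      field_simp
    _ = x ^ (p * (m - 1) + 1) * y ^ (p * (m - 1) - n) := by
      rw [← Real.rpow_add hy, ← Real.rpow_sub hx, ← Real.rpow_sub hy]
      ring_nf

lemma rpow_source_factor_le_one {x y p m : ℝ} {n : ℕ} (hx : 0 < x) (hy : 0 < y) (hm : 0 < m)
    (hpm : 0 < p * (m - 1) - n) (h : y ≤ x ^ (-(p * (m - 1) + 1) / (p * (m - 1) - n))) :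
    x ^ p * y ^ p * (x ^ (p - 1) * y ^ p * y ^ n)⁻¹ ^ m⁻¹ ≤ 1 := by
  rw [rpow_scaling_factor_eq hx hy hm.ne']
  exact Real.rpow_le_one (by positivity)
    (rpow_mul_rpow_le_one_of_le_rpow_neg_div hx hy.le hpm h) (by positivity)

lemma mul_rpow_sub_one_mul_rpow {x : ℝ} (hx : 0 < x) (y p : ℝ) :
    x * (x ^ (p - 1) * y ^ p) = x ^ p * y ^ p := by
  rw [← mul_assoc, mul_comm x, ← Real.rpow_add_one hx.ne', sub_add_cancel]

theorem scaling_lemma_one_general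
    (n : ℕ) (Λ Λ₀ g p m : ℝ) (hΛ₀ : 0 ≤ Λ₀) (hp : 2 < p) (hm : 1 + (n : ℝ) / p < m)
    (Ω : Set (Spc n)) (s t : ℝ)
    (A : Spt n → Spc n →L[ℝ] Spc n) (f u : Spt n → ℝ) (G : Spt n → Spc n)
    (hD : SatD n p Λ A f u G s t Ω) (hV : SatV n p Λ Λ₀ g u (Ioo s t ×ˢ Ω))
    (α β : ℝ) (hα : 0 < α) (hβ : 0 < β) (hβ₁ : β ≤ α ^ (-(p - 1) / (p - 2)))
    (hβ₂ : β ≤ α ^ (-(p * (m - 1) + 1) / (p * (m - 1) - (n : ℝ)))) :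
    SatD n p Λ
        (fun z => (α ^ (p - 1) * β ^ (p - 2)) • A (α ^ (p - 1) * β ^ p * z.1, β • z.2))
        (fun z => α ^ p * β ^ p * f (α ^ (p - 1) * β ^ p * z.1, β • z.2))
        (fun z => α * u (α ^ (p - 1) * β ^ p * z.1, β • z.2))
        (fun z => (α * β) • G (α ^ (p - 1) * β ^ p * z.1, β • z.2))
        (s / (α ^ (p - 1) * β ^ p)) (t / (α ^ (p - 1) * β ^ p))
        ((fun x : Spc n => β • x) ⁻¹' Ω) ∧
    SatV n p Λ (α ^ (p - 1) * β ^ (p - 2) * Λ₀) (α ^ p * β ^ p * g)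
        (fun z => α * u (α ^ (p - 1) * β ^ p * z.1, β • z.2))
        (Ioo (s / (α ^ (p - 1) * β ^ p)) (t / (α ^ (p - 1) * β ^ p)) ×ˢ
          ((fun x : Spc n => β • x) ⁻¹' Ω)) ∧
    α ^ (p - 1) * β ^ (p - 2) * Λ₀ ≤ Λ₀ ∧
    eLpNorm (fun z : Spt n =>
        (α ^ (p - 1) * β ^ (p - 2)) • A (α ^ (p - 1) * β ^ p * z.1, β • z.2)) ⊤
        (volume.restrict
          (Ioo (s / (α ^ (p - 1) * β ^ p)) (t / (α ^ (p - 1) * β ^ p)) ×ˢ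
            ((fun x : Spc n => β • x) ⁻¹' Ω)))
      ≤ eLpNorm A ⊤ (volume.restrict (Ioo s t ×ˢ Ω)) ∧
    eLpNorm (fun z : Spt n =>
        α ^ p * β ^ p * f (α ^ (p - 1) * β ^ p * z.1, β • z.2)) (ENNReal.ofReal m)
        (volume.restrict
          (Ioo (s / (α ^ (p - 1) * β ^ p)) (t / (α ^ (p - 1) * β ^ p)) ×ˢ
            ((fun x : Spc n => β • x) ⁻¹' Ω)))
      ≤ eLpNorm f (ENNReal.ofReal m) (volume.restrict (Ioo s t ×ˢ Ω)) := by
  have hp0 : 0 < p := by linarith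
  have hm0 : 0 < m := by linarith [div_nonneg n.cast_nonneg hp0.le]
  have hpm : 0 < p * (m - 1) - n := by linarith [(div_lt_iff₀' hp0).1 (lt_sub_iff_add_lt'.2 hm)]
  have hflux : α ^ (p - 1) * β ^ (p - 2) ≤ 1 :=
    rpow_mul_rpow_le_one_of_le_rpow_neg_div hα hβ.le (sub_pos.2 hp) hβ₁
  have hc : 0 < α ^ (p - 1) * β ^ p := by positivity
  have hac : α * (α ^ (p - 1) * β ^ p) = (α * β) ^ p := by
    rw [mul_rpow_sub_one_mul_rpow hα, Real.mul_rpow hα.le hβ.le]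
  have hfluxCoeff : α ^ (p - 1) * β ^ (p - 2) = α ^ (p - 1) * β ^ p / β ^ 2 := by
    rw [Real.rpow_sub hβ, Real.rpow_two, mul_div_assoc]
  let c : ℝˣ := Units.mk0 _ hc.ne'
  let b : ℝˣ := Units.mk0 β hβ.ne'
  have hcyl : dilation c b ⁻¹' (Ioo s t ×ˢ Ω)
      = Ioo (s / (α ^ (p - 1) * β ^ p)) (t / (α ^ (p - 1) * β ^ p)) ×ˢ
          ((fun x : Spc n => β • x) ⁻¹' Ω) :=
    dilation_preimage_Ioo_prod b hc s t Ω
  rw [← hcyl]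
  refine ⟨?_, ?_, mul_le_of_le_one_left hΛ₀ hflux, ?_, ?_⟩
  · rw [hfluxCoeff, ← mul_rpow_sub_one_mul_rpow hα]
    exact SatD.comp_dilation (c := c) (b := b) hα hβ hc hac hD
  · rw [hfluxCoeff, ← mul_rpow_sub_one_mul_rpow hα]
    exact SatV.comp_dilation (c := c) (b := b) hα hβ hc hac hV
  · refine eLpNorm_const_smul_comp_dilation_le (c := c) (b := b) hc hβ (by positivity) ?_ A _
    simpa using hflux
  · refine eLpNorm_const_smul_comp_dilation_le (c := c) (b := b) hc hβ (by positivity) ?_ f _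
    rw [one_div, ENNReal.toReal_inv, ENNReal.toReal_ofReal hm0.le]
    exact rpow_source_factor_le_one hα hβ hm0 hpm hβ₂

/-- **First scaling lemma.** If `u` solves both inequalities on `(T₀,0)×Ω` and
`β ≤ α⁻¹`, `β ≤ α^{−(p−1)/(p−2)}`, `β ≤ α^{−(p(m−1)+1)/(p(m−1)−n)}`, then
`v(t,x) = α u(α^{p−1}β^p t, βx)` solves the corresponding inequalities on
`(T₀/(α^{p−1}β^p), 0) × (1/β)Ω` with `A′ = α^{p−1}β^{p−2}A(...)`, `f′ = α^pβ^p f(...)`,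
`Λ₀′ = α^{p−1}β^{p−2}Λ₀ ≤ Λ₀`, `‖A′‖_∞ ≤ ‖A‖_∞` and `‖f′‖_m ≤ ‖f‖_m`. -/
theorem scaling_lemma_one
    (n : ℕ) (hn : 1 ≤ n) (Λ Λ₀ p m : ℝ)
    (hΛ : 0 < Λ) (hΛ₀ : 0 ≤ Λ₀) (hp : 2 < p) (hm : 1 + (n : ℝ) / p < m)
    (Ω : Set (Spc n)) (hΩ : IsOpen Ω) (T₀ : ℝ) (hT₀ : T₀ < 0)
    (A : Spt n → Spc n →L[ℝ] Spc n) (f u : Spt n → ℝ) (G : Spt n → Spc n)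
    (hD : SatD n p Λ A f u G T₀ 0 Ω)
    (hV : SatV n p Λ Λ₀ 0 u (Ioo T₀ 0 ×ˢ Ω))
    (α β : ℝ) (hα : 0 < α) (hβ : 0 < β)
    (h1 : β ≤ α⁻¹) (h2 : β ≤ α ^ (-(p - 1) / (p - 2)))
    (h3 : β ≤ α ^ (-(p * (m - 1) + 1) / (p * (m - 1) - (n : ℝ)))) :
    SatD n p Λ
        (fun z => (α ^ (p - 1) * β ^ (p - 2)) • A (α ^ (p - 1) * β ^ p * z.1, β • z.2))
        (fun z => α ^ p * β ^ p * f (α ^ (p - 1) * β ^ p * z.1, β • z.2))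
        (fun z => α * u (α ^ (p - 1) * β ^ p * z.1, β • z.2))
        (fun z => (α * β) • G (α ^ (p - 1) * β ^ p * z.1, β • z.2))
        (T₀ / (α ^ (p - 1) * β ^ p)) 0 ((fun x : Spc n => β • x) ⁻¹' Ω) ∧
    SatV n p Λ (α ^ (p - 1) * β ^ (p - 2) * Λ₀) 0
        (fun z => α * u (α ^ (p - 1) * β ^ p * z.1, β • z.2))
        (Ioo (T₀ / (α ^ (p - 1) * β ^ p)) 0 ×ˢ ((fun x : Spc n => β • x) ⁻¹' Ω)) ∧
    α ^ (p - 1) * β ^ (p - 2) * Λ₀ ≤ Λ₀ ∧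
    eLpNorm (fun z : Spt n =>
        (α ^ (p - 1) * β ^ (p - 2)) • A (α ^ (p - 1) * β ^ p * z.1, β • z.2)) ⊤
        (volume.restrict
          (Ioo (T₀ / (α ^ (p - 1) * β ^ p)) 0 ×ˢ ((fun x : Spc n => β • x) ⁻¹' Ω)))
      ≤ eLpNorm A ⊤ (volume.restrict (Ioo T₀ 0 ×ˢ Ω)) ∧
    eLpNorm (fun z : Spt n =>
        α ^ p * β ^ p * f (α ^ (p - 1) * β ^ p * z.1, β • z.2)) (ENNReal.ofReal m)
        (volume.restrict
          (Ioo (T₀ / (α ^ (p - 1) * β ^ p)) 0 ×ˢ ((fun x : Spc n => β • x) ⁻¹' Ω)))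
      ≤ eLpNorm f (ENNReal.ofReal m) (volume.restrict (Ioo T₀ 0 ×ˢ Ω)) := by
  simpa only [zero_div, mul_zero] using scaling_lemma_one_general n Λ Λ₀ 0 p m hΛ₀ hp hm Ω T₀ 0
    A f u G hD hV α β hα hβ h2 h3
end
end

section
/- Let n ≥ 1, p > 2, Λ > 0, and let β: [0,∞) → ℝ be a smooth function supported in [0,1] and identically equal to 1 on [0,1/2]. There exists a constant K₀ ∈ (0,1), depending only on Λ, p, n and β, such that for every λ ∈ (0,K₀] and every Λ₀ ∈ [0, λ²K₀], the smooth function σ(t,x) := −2 + λ²·β(|x|/λ) − (λ²/8)·t on ℝ×ℝⁿ satisfies, at every point (t,x) ∈ ℝ×ℝⁿ, the pointwise inequality ∂_t σ(t,x) + Λ|∇σ(t,x)|ᵖ − Λ₀·m⁻(D²σ(t,x)) ≤ 0, where D²σ(t,x) denotes the spatial Hessian of σ at (t,x) and m⁻(M) := min(0, least eigenvalue of the symmetric matrix M). -/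
open MeasureTheory Filter Set
open scoped ENNReal NNReal Topology RealInnerProductSpace

noncomputable section

/-!
By parabolic scaling, the profile `λ² g(x/λ)` has gradient of size `λ` and Hessian of size `1`.
Hence in the residual of the barrier the time derivative contributes exactly `-λ²/8`, the gradient
term at most `|Λ| (λC)^p = λ² · |Λ| C^p λ^(p-2)`, and the Hessian term at most
`Λ₀ D ≤ λ² · K₀ D`, where `C` and `D` bound the first two derivatives of `g`. As `p > 2`, the last
two factors of `λ²` add up to at most `1/8` once `λ ≤ K₀` and `K₀` is small.
-/

section Radial

variable {E F : Type*} [NormedAddCommGroup E] {B : ℝ → F}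

theorem contDiff_comp_norm [InnerProductSpace ℝ E] [NormedAddCommGroup F] [NormedSpace ℝ F]
    {k : WithTop ℕ∞} {c : F} (hB : ContDiffOn ℝ k B (Ioi 0)) (hB_zero : ∀ᶠ r in 𝓝[≥] 0, B r = c) :
    ContDiff ℝ k (fun x : E => B ‖x‖) := by
  refine contDiff_iff_contDiffAt.2 fun x => ?_
  obtain rfl | hx := eq_or_ne x 0
  · have norm_tendsto : Tendsto (fun x : E => ‖x‖) (𝓝 0) (𝓝[≥] 0) := by
      simpa only [sub_zero] using tendsto_norm_sub_self_nhdsGE (0 : E)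
    exact contDiffAt_const.congr_of_eventuallyEq (norm_tendsto.eventually hB_zero)
  · exact (hB.contDiffAt (Ioi_mem_nhds (norm_pos_iff.2 hx))).comp x (contDiffAt_norm ℝ hx)

theorem hasCompactSupport_comp_norm [ProperSpace E] [Zero F] {R : ℝ}
    (hB : ∀ r, R < r → B r = 0) : HasCompactSupport (fun x : E => B ‖x‖) :=
  HasCompactSupport.intro (isCompact_closedBall 0 R) fun x hx =>
    hB _ (by simpa only [mem_closedBall_zero_iff, not_le] using hx)

end Radial

section Derivative

variable {E F : Type*} [NormedAddCommGroup E] [NormedSpace ℝ E] [NormedAddCommGroup F]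
  [NormedSpace ℝ F] {lam : ℝ}

theorem fderiv_smul_comp_inv_smul (hlam : lam ≠ 0) (f : E → F) :
    fderiv ℝ (fun x => lam • f (lam⁻¹ • x)) = fun x => fderiv ℝ f (lam⁻¹ • x) := by
  ext1 x
  calc fderiv ℝ (lam • fun x => f (lam⁻¹ • x)) x = lam • lam⁻¹ • fderiv ℝ f (lam⁻¹ • x) := by
        rw [fderiv_const_smul_field, Pi.smul_apply, fderiv_comp_smul]
    _ = fderiv ℝ f (lam⁻¹ • x) := smul_inv_smul₀ hlam _

theorem fderiv_sq_smul_comp_inv_smul (hlam : lam ≠ 0) (f : E → F) :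
    fderiv ℝ (fun x => lam ^ 2 • f (lam⁻¹ • x)) = fun x => lam • fderiv ℝ f (lam⁻¹ • x) := by
  simp only [pow_two, mul_smul]
  calc fderiv ℝ (lam • fun x => lam • f (lam⁻¹ • x))
      = lam • fderiv ℝ (fun x => lam • f (lam⁻¹ • x)) := fderiv_const_smul_field lam
    _ = fun x => lam • fderiv ℝ f (lam⁻¹ • x) := by rw [fderiv_smul_comp_inv_smul hlam]; rfl

theorem isBounded_range_fderiv {f : E → F} (hf : ContDiff ℝ 1 f) (hf_supp : HasCompactSupport f) :
    Bornology.IsBounded (range (fderiv ℝ f)) :=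
  ((hf_supp.fderiv ℝ).isCompact_range (hf.continuous_fderiv one_ne_zero)).isBounded

end Derivative

section SpaceTime

variable {n : ℕ} {φ : Spt n → ℝ} {z : Spt n}

theorem timeDeriv_eq_deriv (hφ : DifferentiableAt ℝ φ z) :
    timeDeriv φ z = deriv (fun t => φ (t, z.2)) z.1 :=
  (hφ.hasFDerivAt.comp_hasDerivAt z.1
    ((hasDerivAt_id z.1).prodMk (hasDerivAt_const z.1 z.2))).deriv.symm

theorem spaceGrad_eq_gradient (hφ : DifferentiableAt ℝ φ z) :
    spaceGrad φ z = gradient (fun x => φ (z.1, x)) z.2 := by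
  have slice_deriv : HasFDerivAt (fun x => φ (z.1, x))
      ((fderiv ℝ φ z).comp (ContinuousLinearMap.inr ℝ ℝ (Spc n))) z.2 :=
    hφ.hasFDerivAt.comp z.2 (hasFDerivAt_prodMk_right z.1 z.2)
  ext i
  calc spaceGrad φ z i = fderiv ℝ φ z (0, EuclideanSpace.single i 1) := rfl
    _ = ⟪gradient (fun x => φ (z.1, x)) z.2, EuclideanSpace.single i 1⟫ := by
      rw [inner_gradient_left, slice_deriv.fderiv]
      simp only [ContinuousLinearMap.comp_apply, ContinuousLinearMap.inr_apply]
    _ = gradient (fun x => φ (z.1, x)) z.2 i := by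
      rw [EuclideanSpace.inner_single_right, one_mul, conj_trivial]

theorem norm_spaceGrad (hφ : DifferentiableAt ℝ φ z) :
    ‖spaceGrad φ z‖ = ‖fderiv ℝ (fun x => φ (z.1, x)) z.2‖ := by
  rw [spaceGrad_eq_gradient hφ, gradient, LinearIsometryEquiv.norm_map]

end SpaceTime

section Hessian

variable {n : ℕ} {f : Spc n → ℝ} {x : Spc n}

theorem secondDerivAlong_eq (hf : DifferentiableAt ℝ (fderiv ℝ f) x) (v : Spc n) :
    secondDerivAlong f x v = fderiv ℝ (fderiv ℝ f) x v v := by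
  simp [secondDerivAlong, fderiv_clm_apply hf (differentiableAt_const v)]

theorem neg_norm_fderiv_fderiv_le_mMinusOf (hf : DifferentiableAt ℝ (fderiv ℝ f) x) :
    -‖fderiv ℝ (fderiv ℝ f) x‖ ≤ mMinusOf f x := by
  have neg_norm_nonpos : -‖fderiv ℝ (fderiv ℝ f) x‖ ≤ 0 :=
    neg_nonpos.2 (norm_nonneg (fderiv ℝ (fderiv ℝ f) x))
  refine le_min neg_norm_nonpos (Real.le_sInf ?_ neg_norm_nonpos)
  rintro _ ⟨v, hv, rfl⟩
  have rayleigh_bound : ‖fderiv ℝ (fderiv ℝ f) x v v‖ ≤ ‖fderiv ℝ (fderiv ℝ f) x‖ := by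
    simpa only [hv, mul_one] using (fderiv ℝ (fderiv ℝ f) x).le_opNorm₂ v v
  rw [secondDerivAlong_eq hf]
  exact neg_le_of_abs_le rayleigh_bound

end Hessian

/-- The barrier `σ(t,x) = -2 + λ² g(x/λ) - (λ²/8) t` with an arbitrary, not necessarily radial,
spatial profile `g`; the paper takes `g(x) = β(|x|)`. -/
def barrier {n : ℕ} (g : Spc n → ℝ) (lam : ℝ) (z : Spt n) : ℝ :=
  -2 + lam ^ 2 * g (lam⁻¹ • z.2) - lam ^ 2 / 8 * z.1

namespace barrier

variable {n : ℕ} {g : Spc n → ℝ} {lam : ℝ}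

theorem differentiable (hg : Differentiable ℝ g) : Differentiable ℝ (barrier g lam) := by
  unfold barrier
  fun_prop

theorem timeDeriv_eq (hg : Differentiable ℝ g) (z : Spt n) :
    timeDeriv (barrier g lam) z = -(lam ^ 2 / 8) := by
  rw [timeDeriv_eq_deriv (differentiable hg z)]
  simp [barrier, deriv_const_sub]

theorem fderiv_slice (hlam : lam ≠ 0) (t : ℝ) :
    fderiv ℝ (fun x => barrier g lam (t, x)) = fun x => lam • fderiv ℝ g (lam⁻¹ • x) := by
  rw [← fderiv_sq_smul_comp_inv_smul hlam]
  ext1 x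
  simp only [barrier, smul_eq_mul, fderiv_sub_const, fderiv_const_add]

theorem fderiv_fderiv_slice (hlam : lam ≠ 0) (t : ℝ) :
    fderiv ℝ (fderiv ℝ fun x => barrier g lam (t, x)) =
      fun x => fderiv ℝ (fderiv ℝ g) (lam⁻¹ • x) := by
  rw [fderiv_slice hlam]
  exact fderiv_smul_comp_inv_smul hlam (fderiv ℝ g)

theorem norm_spaceGrad_eq (hg : Differentiable ℝ g) (hlam : 0 < lam) (z : Spt n) :
    ‖spaceGrad (barrier g lam) z‖ = lam * ‖fderiv ℝ g (lam⁻¹ • z.2)‖ := by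
  rw [norm_spaceGrad (differentiable hg z), fderiv_slice hlam.ne', norm_smul,
    Real.norm_of_nonneg hlam.le]

theorem neg_norm_le_mMinusOf (hg : Differentiable ℝ (fderiv ℝ g)) (hlam : lam ≠ 0) (z : Spt n) :
    -‖fderiv ℝ (fderiv ℝ g) (lam⁻¹ • z.2)‖ ≤ mMinusOf (fun x => barrier g lam (z.1, x)) z.2 := by
  have slice_differentiable : Differentiable ℝ (fderiv ℝ fun x => barrier g lam (z.1, x)) := by
    rw [fderiv_slice hlam]
    fun_prop
  simpa only [fderiv_fderiv_slice hlam]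
    using neg_norm_fderiv_fderiv_le_mMinusOf (slice_differentiable z.2)

theorem comp_norm (B : ℝ → ℝ) (hlam : 0 ≤ lam) (w : Spt n) :
    barrier (fun x => B ‖x‖) lam w = -2 + lam ^ 2 * B (‖w.2‖ / lam) - lam ^ 2 / 8 * w.1 := by
  rw [barrier, norm_smul, norm_inv, Real.norm_of_nonneg hlam, inv_mul_eq_div]

end barrier

theorem exists_mul_rpow_add_mul_le {q ε : ℝ} (hq : 0 < q) (hε : 0 < ε) (a b : ℝ) :
    ∃ K : ℝ, 0 < K ∧ K < 1 ∧ a * K ^ q + b * K ≤ ε := by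
  have continuous_bound : Continuous fun K : ℝ => a * K ^ q + b * K := by
    have := Real.continuous_rpow_const hq.le
    fun_prop
  have tendsto_bound : Tendsto (fun K : ℝ => a * K ^ q + b * K) (𝓝[>] 0) (𝓝 0) := by
    simpa [Real.zero_rpow hq.ne'] using (continuous_bound.tendsto 0).mono_left nhdsWithin_le_nhds
  obtain ⟨K, hK, hK_pos, hK_lt⟩ :=
    ((tendsto_bound.eventually_le_const hε).and (Ioo_mem_nhdsGT one_pos)).exists
  exact ⟨K, hK_pos, hK_lt, hK⟩

theorem mul_mul_rpow_le_sq_mul {Λ p lam K c C : ℝ} (hp : 2 ≤ p) (hlam : 0 < lam) (hlamK : lam ≤ K)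
    (hc : 0 ≤ c) (hcC : c ≤ C) :
    Λ * (lam * c) ^ p ≤ lam ^ 2 * (|Λ| * C ^ p * K ^ (p - 2)) := by
  have lam_rpow : lam ^ p = lam ^ 2 * lam ^ (p - 2) := by
    rw [← Real.rpow_natCast, ← Real.rpow_add hlam]
    norm_num
  have hC : 0 ≤ C := hc.trans hcC
  calc Λ * (lam * c) ^ p ≤ |Λ| * (lam * c) ^ p := by gcongr; exact le_abs_self Λ
    _ = lam ^ 2 * (|Λ| * c ^ p * lam ^ (p - 2)) := by
      rw [Real.mul_rpow hlam.le hc, lam_rpow]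
      ring
    _ ≤ lam ^ 2 * (|Λ| * C ^ p * K ^ (p - 2)) := by gcongr

theorem barrier_is_subsolution_general {n : ℕ} {p : ℝ} (Λ : ℝ) (hp : 2 < p) {g : Spc n → ℝ}
    (hg : Differentiable ℝ g) (hg' : Differentiable ℝ (fderiv ℝ g))
    (hg_bdd : Bornology.IsBounded (range (fderiv ℝ g)))
    (hg'_bdd : Bornology.IsBounded (range (fderiv ℝ (fderiv ℝ g)))) :
    ∃ K₀ : ℝ, 0 < K₀ ∧ K₀ < 1 ∧
      ∀ (lam Λ₀ : ℝ), 0 < lam → lam ≤ K₀ → 0 ≤ Λ₀ → Λ₀ ≤ lam ^ 2 * K₀ →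
        ∀ z : Spt n,
          timeDeriv (barrier g lam) z + Λ * ‖spaceGrad (barrier g lam) z‖ ^ p
            - Λ₀ * mMinusOf (fun x => barrier g lam (z.1, x)) z.2 ≤ 0 := by
  obtain ⟨C, hC⟩ := hg_bdd.exists_norm_le
  obtain ⟨D, hD⟩ := hg'_bdd.exists_norm_le
  obtain ⟨K, hK_pos, hK_lt, hK⟩ :=
    exists_mul_rpow_add_mul_le (sub_pos.2 hp) (by norm_num : (0 : ℝ) < 1 / 8) (|Λ| * C ^ p) D
  refine ⟨K, hK_pos, hK_lt, fun lam Λ₀ hlam hlamK hΛ₀ hΛ₀K z => ?_⟩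
  set y := lam⁻¹ • z.2
  have gradient_term : Λ * (lam * ‖fderiv ℝ g y‖) ^ p ≤ lam ^ 2 * (|Λ| * C ^ p * K ^ (p - 2)) :=
    mul_mul_rpow_le_sq_mul hp.le hlam hlamK (norm_nonneg _) (hC _ (mem_range_self y))
  have hessian_term : -(Λ₀ * mMinusOf (fun x => barrier g lam (z.1, x)) z.2) ≤
      lam ^ 2 * (D * K) := by
    have mMinusOf_bound := barrier.neg_norm_le_mMinusOf hg' hlam.ne' z
    have hessian_bound := hD _ (mem_range_self y)
    calc -(Λ₀ * mMinusOf (fun x => barrier g lam (z.1, x)) z.2)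
        = Λ₀ * -mMinusOf (fun x => barrier g lam (z.1, x)) z.2 := (mul_neg _ _).symm
      _ ≤ Λ₀ * D := by gcongr; linarith
      _ ≤ lam ^ 2 * K * D := by gcongr; exact (norm_nonneg _).trans hessian_bound
      _ = lam ^ 2 * (D * K) := by ring
  have budget : lam ^ 2 * (|Λ| * C ^ p * K ^ (p - 2) + D * K) ≤ lam ^ 2 * (1 / 8) := by gcongr
  rw [barrier.timeDeriv_eq hg, barrier.norm_spaceGrad_eq hg hlam]
  linarith

/-- **The barrier is a subsolution.** For a smooth profile `β : [0,∞) → ℝ` supported in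
`[0,1]` and `≡ 1` on `[0,1/2]`, there is `K₀ ∈ (0,1)` depending only on `Λ, p, n, β` such
that for `0 < λ ≤ K₀` and `0 ≤ Λ₀ ≤ λ²K₀` the barrier
`σ(t,x) = −2 + λ²β(|x|/λ) − (λ²/8)t` satisfies pointwise
`∂ₜσ + Λ|∇σ|^p − Λ₀ m⁻(D²σ) ≤ 0` on `ℝ × ℝⁿ`. -/
theorem barrier_is_subsolution
    (n : ℕ) (hn : 1 ≤ n) (p Λ : ℝ) (hp : 2 < p) (hΛ : 0 < Λ)
    (B : ℝ → ℝ) (hB : ContDiffOn ℝ (⊤ : ℕ∞) B (Ici 0))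
    (hB1 : ∀ r ∈ Icc (0 : ℝ) (1 / 2), B r = 1)
    (hB0 : ∀ r : ℝ, 1 < r → B r = 0) :
    ∃ K₀ : ℝ, 0 < K₀ ∧ K₀ < 1 ∧
      ∀ (lam Λ₀ : ℝ), 0 < lam → lam ≤ K₀ → 0 ≤ Λ₀ → Λ₀ ≤ lam ^ 2 * K₀ →
        ∀ z : Spt n,
          timeDeriv (fun w : Spt n =>
              -2 + lam ^ 2 * B (‖w.2‖ / lam) - lam ^ 2 / 8 * w.1) z
            + Λ * ‖spaceGrad (fun w : Spt n =>
                -2 + lam ^ 2 * B (‖w.2‖ / lam) - lam ^ 2 / 8 * w.1) z‖ ^ p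
            - Λ₀ * mMinusOf (fun x : Spc n =>
                -2 + lam ^ 2 * B (‖x‖ / lam) - lam ^ 2 / 8 * z.1) z.2
          ≤ 0 := by
  have hg : ContDiff ℝ 2 (fun x : Spc n => B ‖x‖) :=
    contDiff_comp_norm ((hB.mono Ioi_subset_Ici_self).of_le (WithTop.coe_le_coe.2 le_top))
      (eventually_of_mem (Icc_mem_nhdsGE one_half_pos) hB1)
  have hg' : ContDiff ℝ 1 (fderiv ℝ fun x : Spc n => B ‖x‖) := hg.fderiv_right le_rfl
  have hg_supp : HasCompactSupport (fun x : Spc n => B ‖x‖) := hasCompactSupport_comp_norm hB0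
  obtain ⟨K, hK_pos, hK_lt, hK⟩ := barrier_is_subsolution_general Λ hp
    (hg.differentiable two_ne_zero) (hg'.differentiable one_ne_zero)
    (isBounded_range_fderiv (hg.of_le one_le_two) hg_supp)
    (isBounded_range_fderiv hg' (hg_supp.fderiv ℝ))
  refine ⟨K, hK_pos, hK_lt, fun lam Λ₀ hlam hlamK hΛ₀ hΛ₀K z => ?_⟩
  simpa only [funext (barrier.comp_norm B hlam.le)] using hK lam Λ₀ hlam hlamK hΛ₀ hΛ₀K z
end
end

section
/- Let a < b, c > 0, C ≥ 0, and let H: [a,b] → [0,∞) be a function such that H(t) ≤ H(s) + C·(t−s) for all a ≤ s ≤ t ≤ b, and such that for almost every t ∈ [a,b] either H(t) = 0 or H(t) ≥ c. If H(s₀) = 0 for some s₀ ∈ [a,b], then H(t) = 0 for every t ∈ [s₀, b]. -/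
open MeasureTheory Set

/-!
The one-sided Lipschitz bound enters only through semicontinuity: `H` is lower semicontinuous from
the left and upper semicontinuous from the right. Suppose `H s₀ = 0` and let `τ` be the supremum of
the zeros of `H` in `[s₀, t]`. Lower semicontinuity from the left gives `H τ = 0`. If `τ < t`, then
upper semicontinuity from the right gives `H < c` just after `τ`, so by the dichotomy, which holds
at points arbitrarily close to `τ` on the right, `H` has a zero in `(τ, t)`, which is absurd.
-/

open scoped Topology

section Semicontinuity

variable {α β : Type*} [TopologicalSpace α] {f g : α → β} {s : Set α} {x : α}

theorem lowerSemicontinuousWithinAt_of_minorant [Preorder β]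
    (hg : LowerSemicontinuousWithinAt g s x) (hle : ∀ y ∈ s, g y ≤ f y) (hx : f x ≤ g x) :
    LowerSemicontinuousWithinAt f s x := fun m hm => by
  filter_upwards [hg m (hm.trans_le hx), self_mem_nhdsWithin] with y hmy hy
  exact hmy.trans_le (hle y hy)

theorem upperSemicontinuousWithinAt_of_majorant [Preorder β]
    (hg : UpperSemicontinuousWithinAt g s x) (hle : ∀ y ∈ s, f y ≤ g y) (hx : g x ≤ f x) :
    UpperSemicontinuousWithinAt f s x := fun m hm => by
  filter_upwards [hg m (hx.trans_lt hm), self_mem_nhdsWithin] with y hym hy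
  exact (hle y hy).trans_lt hym

theorem le_of_lowerSemicontinuousWithinAt_of_mem_closure [LinearOrder β] {m : β}
    (hf : LowerSemicontinuousWithinAt f s x) (hx : x ∈ closure s) (hle : ∀ y ∈ s, f y ≤ m) :
    f x ≤ m := by
  by_contra! hm
  have : (𝓝[s] x).NeBot := mem_closure_iff_nhdsWithin_neBot.1 hx
  obtain ⟨y, hmy, hy⟩ := ((hf m hm).and self_mem_nhdsWithin).exists
  exact (hle y hy).not_gt hmy

end Semicontinuity

section OneSidedLipschitz

variable {f : ℝ → ℝ} {s : Set ℝ} {x C : ℝ}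

theorem lowerSemicontinuousWithinAt_of_le_add_mul_sub
    (h : ∀ y ∈ s, f x ≤ f y + C * (x - y)) : LowerSemicontinuousWithinAt f s x := by
  have hcont : Continuous fun y => f x - C * (x - y) := by fun_prop
  exact lowerSemicontinuousWithinAt_of_minorant
    (hcont.lowerSemicontinuous.lowerSemicontinuousWithinAt s x)
    (fun y hy => sub_le_iff_le_add.2 (h y hy)) (by simp)

theorem upperSemicontinuousWithinAt_of_le_add_mul_sub
    (h : ∀ y ∈ s, f y ≤ f x + C * (y - x)) : UpperSemicontinuousWithinAt f s x := by
  have hcont : Continuous fun y => f x + C * (y - x) := by fun_prop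
  exact upperSemicontinuousWithinAt_of_majorant
    (hcont.upperSemicontinuous.upperSemicontinuousWithinAt s x) h (by simp)

end OneSidedLipschitz

theorem frequently_nhdsGT_of_ae_restrict_Icc {α : Type*} [LinearOrder α] [TopologicalSpace α]
    [OrderTopology α] [DenselyOrdered α] [MeasurableSpace α] [OpensMeasurableSpace α]
    {μ : Measure α} [μ.IsOpenPosMeasure] {p : α → Prop} {a b t : α}
    (hp : ∀ᵐ r ∂μ.restrict (Icc a b), p r) (ht : t ∈ Ico a b) : ∃ᶠ r in 𝓝[>] t, p r := by
  have hdense : Dense {r | r ∈ Icc a b → p r} :=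
    μ.dense_of_ae ((ae_restrict_iff' measurableSet_Icc).1 hp)
  refine (nhdsGT_basis_of_exists_gt ⟨b, ht.2⟩).frequently_iff.2 fun u htu => ?_
  obtain ⟨r, hr, htr, hru⟩ := hdense.exists_between (lt_min htu ht.2)
  rw [lt_min_iff] at hru
  exact ⟨r, ⟨htr, hru.1⟩, hr ⟨ht.1.trans htr.le, hru.2.le⟩⟩

section Propagation

variable {α β : Type*} [TopologicalSpace α] [LinearOrder β] [Zero β] {f : α → β} {c : β}

theorem exists_zero_mem_Ioo_of_frequently_nhdsGT [LinearOrder α] [OrderTopology α] {t b : α}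
    (htb : t < b) (hupper : UpperSemicontinuousWithinAt f (Icc t b) t)
    (hdich : ∃ᶠ r in 𝓝[>] t, f r = 0 ∨ c ≤ f r) (ht : f t < c) :
    ∃ r ∈ Ioo t b, f r = 0 := by
  have hlt : ∀ᶠ r in 𝓝[>] t, f r < c := by
    rw [← nhdsWithin_Ioc_eq_nhdsGT htb]
    exact hupper.mono Ioc_subset_Icc_self c ht
  obtain ⟨r, hr, hrc, hmem⟩ := (hdich.and_eventually (hlt.and (Ioo_mem_nhdsGT htb))).exists
  exact ⟨r, hmem, hr.resolve_right hrc.not_ge⟩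

theorem vanishing_propagates_general [ConditionallyCompleteLinearOrder α] [OrderTopology α]
    {a b : α} (hc : 0 < c)
    (hnonneg : ∀ t ∈ Icc a b, 0 ≤ f t)
    (hlower : ∀ t ∈ Icc a b, LowerSemicontinuousWithinAt f (Icc a t) t)
    (hupper : ∀ t ∈ Ico a b, UpperSemicontinuousWithinAt f (Icc t b) t)
    (hdich : ∀ t ∈ Ico a b, ∃ᶠ r in 𝓝[>] t, f r = 0 ∨ c ≤ f r)
    (ha : f a = 0) : ∀ t ∈ Icc a b, f t = 0 := by
  intro t ht
  let zeros : Set α := {s ∈ Icc a t | f s = 0}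
  have ha_mem : a ∈ zeros := ⟨left_mem_Icc.2 ht.1, ha⟩
  obtain ⟨τ, hτ⟩ : ∃ τ, IsLUB zeros τ :=
    ⟨sSup zeros, isLUB_csSup ⟨a, ha_mem⟩ ⟨t, fun _ hs => hs.1.2⟩⟩
  have haτ : a ≤ τ := hτ.1 ha_mem
  have hτt : τ ≤ t := hτ.2 fun _ hs => hs.1.2
  have hτ_mem : τ ∈ Icc a b := ⟨haτ, hτt.trans ht.2⟩
  have hτ_zero : f τ = 0 := by
    have hlsc : LowerSemicontinuousWithinAt f zeros τ :=
      (hlower τ hτ_mem).mono fun s hs => ⟨hs.1.1, hτ.1 hs⟩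
    exact (le_of_lowerSemicontinuousWithinAt_of_mem_closure hlsc (hτ.mem_closure ⟨a, ha_mem⟩)
      fun s hs => hs.2.le).antisymm (hnonneg τ hτ_mem)
  obtain rfl | hlt := hτt.eq_or_lt
  · exact hτ_zero
  have hτ_Ico : τ ∈ Ico a b := ⟨haτ, hlt.trans_le ht.2⟩
  obtain ⟨r, hr, hr_zero⟩ := exists_zero_mem_Ioo_of_frequently_nhdsGT hlt
    ((hupper τ hτ_Ico).mono (Icc_subset_Icc_right ht.2)) (hdich τ hτ_Ico)
    (hτ_zero.trans_lt hc)
  exact absurd (hτ.1 ⟨⟨haτ.trans hr.1.le, hr.2.le⟩, hr_zero⟩) hr.1.not_ge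

end Propagation

/-- **Propagation of vanishing.** If `H : [a,b] → [0,∞)` satisfies the one-sided bound
`H(t) ≤ H(s) + C(t−s)` for all `a ≤ s ≤ t ≤ b` and almost everywhere the dichotomy
`H(t) = 0` or `H(t) ≥ c` (with `c > 0`), then `H(s₀) = 0` forces `H ≡ 0` on `[s₀,b]`. -/
theorem vanishing_propagates
    (a b c C : ℝ) (H : ℝ → ℝ)
    (hab : a < b) (hc : 0 < c) (hC : 0 ≤ C)
    (hnonneg : ∀ t ∈ Icc a b, 0 ≤ H t)
    (hlip : ∀ s t, a ≤ s → s ≤ t → t ≤ b → H t ≤ H s + C * (t - s))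
    (hdich : ∀ᵐ t ∂volume.restrict (Icc a b), H t = 0 ∨ c ≤ H t)
    (s₀ : ℝ) (hs₀ : s₀ ∈ Icc a b) (hH : H s₀ = 0) :
    ∀ t ∈ Icc s₀ b, H t = 0 :=
  vanishing_propagates_general hc (fun t ht => hnonneg t ⟨hs₀.1.trans ht.1, ht.2⟩)
    (fun t ht => lowerSemicontinuousWithinAt_of_le_add_mul_sub fun s hs =>
      hlip s t (hs₀.1.trans hs.1) hs.2 ht.2)
    (fun t ht => upperSemicontinuousWithinAt_of_le_add_mul_sub fun r hr =>
      hlip t r (hs₀.1.trans ht.1) hr.1 hr.2)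
    (fun _ ht => frequently_nhdsGT_of_ae_restrict_Icc hdich ⟨hs₀.1.trans ht.1, ht.2⟩) hH
end
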